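/- arXiv:1909.03327 — 4 statements merged into one kernel-verified Lean document; each statement's English description precedes it below -/
import Mathlib

section
/- Let u be a real number with u ≠ 0 and 3 + 2u ≠ 0, set η(u) = −6u/(3 + 2u) and β₄(u) = (1 − 2η(u))u + (2/3)u²(4 + η(u)). Then β₄(u) = 0 if and only if 4u² + 66u + 9 = 0, if and only if u = (−33 + √1053)/4 or u = (−33 − √1053)/4. Moreover (−33 + √1053)/4 lies in the open interval (−0.15, −0.13) and (−33 − √1053)/4 lies in the open interval (−16.4, −16.3). -/
/-- Anomalous dimension in the LPA of the quartic matrix-model FRG flow. -/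
noncomputable def etaLPA (u : ℝ) : ℝ := -6 * u / (3 + 2 * u)

/-- Quartic beta function at truncation order `k = 6`. -/
noncomputable def beta4LPA (u : ℝ) : ℝ :=
  (1 - 2 * etaLPA u) * u + (2 / 3) * u ^ 2 * (4 + etaLPA u)

/-- The two nonzero fixed points of the `k = 6` LPA truncation are the roots of
`4u² + 66u + 9 = 0`, lying near `-0.14` and `-16.36`. -/
theorem beta4_fixed_points (u : ℝ) (hu : u ≠ 0) (h : 3 + 2 * u ≠ 0) :
    (beta4LPA u = 0 ↔ 4 * u ^ 2 + 66 * u + 9 = 0) ∧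
    (4 * u ^ 2 + 66 * u + 9 = 0 ↔
      u = (-33 + Real.sqrt 1053) / 4 ∨ u = (-33 - Real.sqrt 1053) / 4) ∧
    (-33 + Real.sqrt 1053) / 4 ∈ Set.Ioo (-0.15 : ℝ) (-0.13) ∧
    (-33 - Real.sqrt 1053) / 4 ∈ Set.Ioo (-16.4 : ℝ) (-16.3) := by
  have hs : Real.sqrt 1053 ^ 2 = 1053 := Real.sq_sqrt (by norm_num)
  have h1 : (32.4 : ℝ) < Real.sqrt 1053 := Real.lt_sqrt_of_sq_lt (by norm_num)
  have h2 : Real.sqrt 1053 < (32.48 : ℝ) := by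
    rw [Real.sqrt_lt' (by norm_num)]; norm_num
  have key : beta4LPA u = u * (4 * u ^ 2 + 66 * u + 9) / (3 * (3 + 2 * u)) := by
    unfold beta4LPA etaLPA
    field_simp
    ring
  refine ⟨?_, ?_, ?_, ?_⟩
  · rw [key, div_eq_zero_iff]
    simp [hu, h]
  · constructor
    · intro hq
      have hm : (u - (-33 + Real.sqrt 1053) / 4) * (u - (-33 - Real.sqrt 1053) / 4) = 0 := by
        linear_combination hq / 4 - hs / 16
      rcases mul_eq_zero.mp hm with h0 | h0
      · left; linarith
      · right; linarith
    · rintro (h0 | h0) <;> rw [h0] <;> linear_combination hs / 4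
  · norm_num at h1 h2 ⊢
    constructor <;> linarith
  · norm_num at h1 h2 ⊢
    constructor <;> linarith
end

section
/- Let u* = (−33 + √1053)/4 and let β₄(u) = (1 − 2η(u))u + (2/3)u²(4 + η(u)) with η(u) = −6u/(3 + 2u), defined for u ≠ −3/2. Then β₄ is differentiable at u* and −β₄′(u*) lies in the open interval (1.08, 1.10). -/
theorem beta4LPA_hasDerivAt (u : ℝ) (h : 3 + 2 * u ≠ 0) :
    HasDerivAt beta4LPA
      (((3 + 16 * u) * (3 + 2 * u) ^ 2 + 3 * (24 * u - 12 * u ^ 2) * (3 + 2 * u)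
        - 6 * (12 * u ^ 2 - 4 * u ^ 3)) / (3 * (3 + 2 * u) ^ 2)) u := by
  have hi := hasDerivAt_id' u
  have he : HasDerivAt etaLPA
      (((-6 * 1) * (3 + 2 * u) - (-6 * u) * (2 * 1)) / (3 + 2 * u) ^ 2) u :=
    (hi.const_mul (-6)).div ((hi.const_mul 2).const_add 3) h
  have hb := (((he.const_mul 2).const_sub 1).mul hi).add
    (((hi.pow 2).const_mul (2 / 3)).mul (he.const_add 4))
  refine HasDerivAt.congr_deriv (f := beta4LPA) hb ?_
  simp only [etaLPA, Pi.pow_apply]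
  field_simp
  ring

/-- At the nontrivial fixed point `u* = (-33 + √1053)/4`, the beta function `β₄` is
differentiable and the critical exponent `θ = -β₄'(u*)` is approximately `1.09`. -/
theorem critical_exponent_at_fixed_point :
    DifferentiableAt ℝ beta4LPA ((-33 + Real.sqrt 1053) / 4) ∧
    -deriv beta4LPA ((-33 + Real.sqrt 1053) / 4) ∈ Set.Ioo (1.08 : ℝ) 1.10 := by
  have hs : Real.sqrt 1053 ^ 2 = 1053 := Real.sq_sqrt (by norm_num)
  have h1 : 32.4499 < Real.sqrt 1053 := Real.lt_sqrt_of_sq_lt (by norm_num)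
  have h2 : Real.sqrt 1053 < 32.4501 := (Real.sqrt_lt' (by norm_num)).2 (by norm_num)
  generalize hu : (-33 + Real.sqrt 1053) / 4 = u
  have hsu : Real.sqrt 1053 = 4 * u + 33 := by linarith
  rw [hsu] at hs h1 h2
  have q2 : u ^ 2 = -(66 * u + 9) / 4 := by linarith
  have q3 : u ^ 3 = -(66 * u ^ 2 + 9 * u) / 4 := by
    linear_combination u * q2
  have hd : 0 < 3 + 2 * u := by norm_num at h1; linarith
  have hb := beta4LPA_hasDerivAt u hd.ne'
  refine ⟨hb.differentiableAt, ?_⟩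
  rw [hb.deriv, ← neg_div]
  have hp : 0 < 3 * (3 + 2 * u) ^ 2 := by positivity
  norm_num at h1 h2
  constructor
  · rw [lt_div_iff₀ hp]
    ring_nf
    rw [q3, q2]
    linarith
  · rw [div_lt_iff₀ hp]
    ring_nf
    rw [q3, q2]
    linarith
end

section
/- Define η(u) = −6u/(3 + 2u), β₄(u, w) = (1 − 2η(u))u + (2/3)u²(4 + η(u)) − 4w(1 + η(u)/3), and β₆(u, w) = (2 − 3η(u) + 2u(4 + η(u)))w − 3u³(1 + η(u)/5), for real u with 3 + 2u ≠ 0 and real w. Then there exist real numbers u ∈ (−0.11, −0.09) and w ∈ (−0.01, 0) with β₄(u, w) = 0 and β₆(u, w) = 0. -/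
/-- Quartic beta function at truncation order `k = 8`. -/
noncomputable def beta4 (u w : ℝ) : ℝ :=
  (1 - 2 * etaLPA u) * u + (2 / 3) * u ^ 2 * (4 + etaLPA u) - 4 * w * (1 + etaLPA u / 3)

/-- Sextic beta function at truncation order `k = 8`. -/
noncomputable def beta6 (u w : ℝ) : ℝ :=
  (2 - 3 * etaLPA u + 2 * u * (4 + etaLPA u)) * w - 3 * u ^ 3 * (1 + etaLPA u / 5)

/-- Existence of the fixed point `p₂ ≈ (-0.101, -0.007)` of the `k = 8` LPA truncation. -/
theorem fixed_point_p2 :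
    ∃ u w : ℝ, u ∈ Set.Ioo (-0.11 : ℝ) (-0.09) ∧ w ∈ Set.Ioo (-0.01 : ℝ) 0 ∧
      3 + 2 * u ≠ 0 ∧ beta4 u w = 0 ∧ beta6 u w = 0 := by
  have hc : ContinuousOn (fun u : ℝ => (6 + 46 * u + 4 * u ^ 2) *
      ((3 * u + 22 * u ^ 2 + 4 / 3 * u ^ 3) / 12) - 3 * u ^ 3 * (3 + 4 * u / 5))
      (Set.Icc (-0.102 : ℝ) (-0.1)) := by fun_prop
  obtain ⟨u, ⟨h1, h2⟩, hu⟩ := intermediate_value_Icc' (by norm_num) hc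
    (show (0 : ℝ) ∈ Set.Icc _ _ by constructor <;> norm_num)
  simp only at hu
  norm_num at h1 h2
  have hd : 3 + 2 * u ≠ 0 := by linarith
  have hsq1 : u ^ 2 ≤ 0.0105 := by nlinarith
  have hsq2 : 0.01 ≤ u ^ 2 := by nlinarith
  have hcu1 : u ^ 3 ≤ 0 := by nlinarith
  have hcu2 : -0.0011 ≤ u ^ 3 := by nlinarith
  refine ⟨u, (3 * u + 22 * u ^ 2 + 4 / 3 * u ^ 3) / 12, ⟨by linarith, by linarith⟩,
    ⟨by linarith, by linarith⟩, hd, ?_, ?_⟩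
  · unfold beta4 etaLPA
    field_simp
    ring
  · have : beta6 u ((3 * u + 22 * u ^ 2 + 4 / 3 * u ^ 3) / 12) =
        ((6 + 46 * u + 4 * u ^ 2) * ((3 * u + 22 * u ^ 2 + 4 / 3 * u ^ 3) / 12)
          - 3 * u ^ 3 * (3 + 4 * u / 5)) / (3 + 2 * u) := by
      unfold beta6 etaLPA
      field_simp
      ring
    rw [this, hu, zero_div]
end

section
/- Define η(u) = −6u/(3 + 2u), β₄(u, w) = (1 − 2η(u))u + (2/3)u²(4 + η(u)) − 4w(1 + η(u)/3), and β₆(u, w) = (2 − 3η(u) + 2u(4 + η(u)))w − 3u³(1 + η(u)/5), for real u with 3 + 2u ≠ 0 and real w. Then there exist real numbers u ∈ (−0.21, −0.19) and w ∈ (0.01, 0.03) with β₄(u, w) = 0 and β₆(u, w) = 0. -/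
/-- Existence of the fixed point `p₁ ≈ (-0.20, 0.02)` of the `k = 8` LPA truncation. -/
theorem fixed_point_p1 :
    ∃ u w : ℝ, u ∈ Set.Ioo (-0.21 : ℝ) (-0.19) ∧ w ∈ Set.Ioo (0.01 : ℝ) 0.03 ∧
      3 + 2 * u ≠ 0 ∧ beta4 u w = 0 ∧ beta6 u w = 0 := by
  obtain ⟨u, hu, h⟩ : ∃ u ∈ Set.Icc (-0.205 : ℝ) (-0.195),
      (6 + 46 * u + 4 * u ^ 2) * (u / 4 + 11 * u ^ 2 / 6 + u ^ 3 / 9)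
        - 3 * u ^ 3 * (3 + 4 * u / 5) = 0 := by
    have hc : ContinuousOn (fun u : ℝ =>
        (6 + 46 * u + 4 * u ^ 2) * (u / 4 + 11 * u ^ 2 / 6 + u ^ 3 / 9)
          - 3 * u ^ 3 * (3 + 4 * u / 5)) (Set.Icc (-0.205 : ℝ) (-0.195)) := by
      fun_prop
    exact intermediate_value_Icc (by norm_num) hc ⟨by norm_num, by norm_num⟩
  obtain ⟨h1, h2⟩ := hu
  norm_num at h1 h2
  have h3 : 3 + 2 * u ≠ 0 := by
    have : 0 < 3 + 2 * u := by linarith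
    exact this.ne'
  refine ⟨u, u / 4 + 11 * u ^ 2 / 6 + u ^ 3 / 9, ⟨by norm_num; linarith, by norm_num; linarith⟩,
    ?_, h3, ?_, ?_⟩
  · have a : u ^ 2 ≤ (41 / 200) ^ 2 := by nlinarith
    have b : (39 / 200) ^ 2 ≤ u ^ 2 := by nlinarith
    have c : u ^ 3 ≤ 0 := by nlinarith
    have d : -(1 / 100) ≤ u ^ 3 := by nlinarith
    norm_num at a b ⊢
    constructor <;> linarith
  · unfold beta4 etaLPA
    field_simp
    ring
  · have e : beta6 u (u / 4 + 11 * u ^ 2 / 6 + u ^ 3 / 9) =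
        ((6 + 46 * u + 4 * u ^ 2) * (u / 4 + 11 * u ^ 2 / 6 + u ^ 3 / 9)
        - 3 * u ^ 3 * (3 + 4 * u / 5)) / (3 + 2 * u) := by
      unfold beta6 etaLPA
      field_simp
      ring
    rw [e, h, zero_div]
end
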